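/- arXiv:2512.24599 — 2 statements merged into one kernel-verified Lean document; each statement's English description precedes it below -/
import Mathlib

section
/- Let σ be a real number with 0 ≤ σ ≤ 1/2. Then for every real b with 0 ≤ b ≤ 1 and every real c with −1 ≤ c ≤ 1, one has 1 ≤ b^{2σ} c² + 2 (1 − b c)^{2σ}. -/
/-- Key scalar inequality in Lemma B.2, part 1: for `0 ≤ σ ≤ 1/2`, `0 ≤ b ≤ 1` and
`−1 ≤ c ≤ 1`, one has `1 ≤ b^{2σ} c² + 2 (1 − b c)^{2σ}`. -/
theorem stmt_4 (σ : ℝ) (hσ0 : 0 ≤ σ) (hσ1 : σ ≤ 1 / 2)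
    (b : ℝ) (hb0 : 0 ≤ b) (hb1 : b ≤ 1)
    (c : ℝ) (hc0 : -1 ≤ c) (hc1 : c ≤ 1) :
    1 ≤ b ^ (2 * σ) * c ^ 2 + 2 * (1 - b * c) ^ (2 * σ) := by
  have h2σ : 2 * σ ≤ 1 := by linarith
  rcases le_total c 0 with hc | hc
  · -- Here `1 - b c ≥ 1`, so the second summand alone is at least `2`.
    have hbc : b * c ≤ 0 := mul_nonpos_of_nonneg_of_nonpos hb0 hc
    have h1 : 1 ≤ (1 - b * c) ^ (2 * σ) :=
      Real.one_le_rpow (by linarith) (by linarith)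
    have h2 : 0 ≤ b ^ (2 * σ) * c ^ 2 := by positivity
    linarith
  · -- Both bases lie in `[0, 1]`, so `x ≤ x ^ (2σ)` reduces the claim to
    -- `b c² + 2 (1 - b c) ≥ (b c)² + 2 (1 - b c) = (1 - b c)² + 1`.
    have hbc0 : 0 ≤ b * c := mul_nonneg hb0 hc
    have hbc1 : b * c ≤ 1 := mul_le_one₀ hb1 hc hc1
    have h1 : b ≤ b ^ (2 * σ) := Real.self_le_rpow_of_le_one hb0 hb1 h2σ
    have h2 : 1 - b * c ≤ (1 - b * c) ^ (2 * σ) :=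
      Real.self_le_rpow_of_le_one (by linarith) (by linarith) h2σ
    have h3 : b * c ^ 2 ≤ b ^ (2 * σ) * c ^ 2 :=
      mul_le_mul_of_nonneg_right h1 (sq_nonneg c)
    have h4 : b * b * c ^ 2 ≤ b * c ^ 2 :=
      mul_le_mul_of_nonneg_right (mul_le_of_le_one_right hb0 hb1) (sq_nonneg c)
    nlinarith [sq_nonneg (b * c - 1)]
end

section
/- Let σ be a real number with 0 ≤ σ ≤ 1/2. Then for all real numbers r > 0, s > 0, and every real t with −1 ≤ t ≤ 1, one has (r^{2σ} + s^{2σ})² − 4 r^{2σ} s^{2σ} t² ≤ 2^{3−2σ} (r² + s² − 2 r s t)^{2σ}. -/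
/-!
With `p = 2σ ∈ [0, 1]`, put `A = (r - s)²` and `B = 2rs(1 - t)`, so that
`r² + s² - 2rst = A + B`, and write the left-hand side as
`(r^p - s^p)² + 4 (rs)^p (1 - t²)`. Subadditivity of `x ↦ x^p` bounds the first term by `A^p`.
The second is at most `4 B^p`, because `v = 1 - t²` satisfies `v ≤ v^p ≤ (2(1 - t))^p`.
Concavity gives `A^p + B^p ≤ 2^(1-p) (A + B)^p`, whence the bound `4 · 2^(1-p) (A + B)^p`.
-/

lemma sq_rpow_sub_rpow_le {p : ℝ} (hp0 : 0 ≤ p) (hp1 : p ≤ 1) {r s : ℝ} (hr : 0 < r)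
    (hs : 0 < s) : (r ^ p - s ^ p) ^ 2 ≤ ((r - s) ^ 2) ^ p := by
  wlog h : s ≤ r generalizing r s
  · have := this hs hr (le_of_not_ge h)
    rwa [← neg_sub s r, neg_sq, ← neg_sub (s ^ p), neg_sq]
  have hsub : r ^ p ≤ (r - s) ^ p + s ^ p := by
    simpa using Real.rpow_add_le_add_rpow (sub_nonneg.2 h) hs.le hp0 hp1
  have hmono : s ^ p ≤ r ^ p := Real.rpow_le_rpow hs.le h hp0
  have hcomm : ((r - s) ^ 2) ^ p = ((r - s) ^ p) ^ 2 := by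
    rw [sq, sq, Real.mul_rpow (sub_nonneg.2 h) (sub_nonneg.2 h)]
  rw [hcomm]
  exact pow_le_pow_left₀ (by linarith) (by linarith) 2

lemma rpow_add_rpow_le_two_rpow_mul {p : ℝ} (hp0 : 0 ≤ p) (hp1 : p ≤ 1) {a b : ℝ}
    (ha : 0 ≤ a) (hb : 0 ≤ b) : a ^ p + b ^ p ≤ 2 ^ (1 - p) * (a + b) ^ p := by
  have h := (Real.concaveOn_rpow hp0 hp1).2 (Set.mem_Ici.2 ha) (Set.mem_Ici.2 hb)
    (by norm_num : (0 : ℝ) ≤ 1 / 2) (by norm_num : (0 : ℝ) ≤ 1 / 2) (by norm_num)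
  simp only [smul_eq_mul] at h
  rw [← mul_add, ← mul_add, mul_comm (1 / 2) (a + b), mul_one_div,
    Real.div_rpow (add_nonneg ha hb) zero_le_two] at h
  rw [Real.rpow_sub two_pos, Real.rpow_one, div_mul_eq_mul_div, mul_div_assoc]
  linarith

/-- Core real-variable inequality of Lemma B.2, part 1: for `0 ≤ σ ≤ 1/2`, `r, s > 0`,
and `−1 ≤ t ≤ 1`,
`(r^{2σ} + s^{2σ})² − 4 r^{2σ} s^{2σ} t² ≤ 2^{3−2σ} (r² + s² − 2 r s t)^{2σ}`. -/
theorem stmt_5 (σ : ℝ) (hσ0 : 0 ≤ σ) (hσ1 : σ ≤ 1 / 2)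
    (r s : ℝ) (hr : 0 < r) (hs : 0 < s)
    (t : ℝ) (ht0 : -1 ≤ t) (ht1 : t ≤ 1) :
    (r ^ (2 * σ) + s ^ (2 * σ)) ^ 2 - 4 * r ^ (2 * σ) * s ^ (2 * σ) * t ^ 2
      ≤ 2 ^ (3 - 2 * σ) * (r ^ 2 + s ^ 2 - 2 * r * s * t) ^ (2 * σ) := by
  have hp0 : 0 ≤ 2 * σ := by linarith
  have hp1 : 2 * σ ≤ 1 := by linarith
  generalize 2 * σ = p at hp0 hp1 ⊢
  have hrs : 0 < r * s := mul_pos hr hs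
  have hu : 0 ≤ 2 * (1 - t) := by linarith
  have hA := sq_rpow_sub_rpow_le hp0 hp1 hr hs
  have hv0 : 0 ≤ 1 - t ^ 2 := by nlinarith
  have hv : 1 - t ^ 2 ≤ (2 * (1 - t)) ^ p :=
    (Real.self_le_rpow_of_le_one hv0 (by nlinarith) hp1).trans
      (Real.rpow_le_rpow hv0 (by nlinarith) hp0)
  have hB : r ^ p * s ^ p * (1 - t ^ 2) ≤ (r * s * (2 * (1 - t))) ^ p := by
    rw [Real.mul_rpow hrs.le hu, Real.mul_rpow hr.le hs.le]
    exact mul_le_mul_of_nonneg_left hv (by positivity)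
  have hAB := rpow_add_rpow_le_two_rpow_mul hp0 hp1 (sq_nonneg (r - s)) (mul_nonneg hrs.le hu)
  have hD : (r - s) ^ 2 + r * s * (2 * (1 - t)) = r ^ 2 + s ^ 2 - 2 * r * s * t := by ring
  have h2 : (2 : ℝ) ^ (3 - p) = 4 * 2 ^ (1 - p) := by
    rw [show 3 - p = 2 + (1 - p) by ring, Real.rpow_add two_pos]
    norm_num
  have hA0 : 0 ≤ ((r - s) ^ 2) ^ p := by positivity
  rw [hD] at hAB
  rw [h2]
  linarith
end
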